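/- Let K be an algebraically closed field, R = K[x_1, ..., x_d] a polynomial ring, and G = ⟨g⟩ a cyclic group of order t acting linearly on R by g(x_i) = ω x_i for all i, where ω ∈ K is a primitive t-th root of unity. Let S = K[x_1, ..., x_d, y_1, ..., y_d], let I_G be the Derksen ideal, and let n = (x_1, ..., x_d, y_1, ..., y_d). Then I_G^{(n)} S_p = I_G^n S_p for every n ≥ 1 and every prime ideal p of S with p ≠ n. -/

import Mathlib

/-!
Write `P_h = (yᵢ - c_h xᵢ)` for the component of `I = I_G` at `h ∈ G`, where `h` acts on the
variables as multiplication by the scalar `c_h`; the scalars `c_h` are pairwise distinct because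
`ω` is a primitive root of unity. Two facts carry the proof.

* For `h ≠ k` the sum `P_h + P_k` contains all variables, since `c_h - c_k` is a unit. As the
  ideal of the variables is maximal, a prime `p` different from it contains at most one `P_h`.
* A linear change of coordinates carries `P_h` to the ideal of the variables `z` of `A[z]`,
  `A = K[x]` a domain. Hence `P_h` is prime, and `u f ∈ P_hⁿ` with `u ∉ P_h` forces `f ∈ P_hⁿ`
  (`mem_linComp_pow_of_mul_mem`), by comparing coefficients of low degree.

If `p` contains no `P_h`, then `I ⊄ p` and both ideals become the unit ideal in `S_p`. If `p`
contains only `P_h`, pick `s ∉ p` lying in every other component. Then `P_h = (I : s)` is an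
associated prime of `S/I`, so every `f ∈ I^{(n)}` lies in `Iⁿ S_{P_h} ∩ S ⊆ P_hⁿ`, and
`sⁿ f ∈ sⁿ P_hⁿ ⊆ Iⁿ`, where `s` is a unit in `S_p`.
-/

open MvPolynomial

/-- The `n`-th symbolic power of an ideal `I`:
`I^{(n)} = ⋂_{p ∈ Ass(A/I)} (Iⁿ A_p ∩ A)`. -/
noncomputable def symbolicPower {A : Type*} [CommRing A] (I : Ideal A) (n : ℕ) : Ideal A :=
  ⨅ (p : Ideal A) (hp : p ∈ associatedPrimes A (A ⧸ I)),
    haveI : p.IsPrime := hp.isPrime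
    Ideal.comap (algebraMap A (Localization.AtPrime p))
      (Ideal.map (algebraMap A (Localization.AtPrime p)) (I ^ n))

/-- The component `(y₁ - g(x₁), …, y_d - g(x_d))` of the Derksen ideal, in
`S = K[x₁, …, x_d, y₁, …, y_d]`, where the `x`-variables are indexed by `Sum.inl`
and the `y`-variables by `Sum.inr`. -/
noncomputable def derksenComponent (K : Type*) [Field K] (d : ℕ) {G : Type*} [Group G]
    [MulSemiringAction G (MvPolynomial (Fin d) K)] (g : G) :
    Ideal (MvPolynomial (Fin d ⊕ Fin d) K) :=
  Ideal.span (Set.range fun i : Fin d =>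
    X (Sum.inr i) - rename Sum.inl (g • (X i : MvPolynomial (Fin d) K)))

/-- The Derksen ideal `I_G = ⋂_{g ∈ G} (y₁ - g(x₁), …, y_d - g(x_d))`. -/
noncomputable def derksenIdeal (K : Type*) [Field K] (d : ℕ) (G : Type*) [Group G]
    [MulSemiringAction G (MvPolynomial (Fin d) K)] :
    Ideal (MvPolynomial (Fin d ⊕ Fin d) K) :=
  ⨅ g : G, derksenComponent K d g


/-! ### Powers of the ideal of the variables -/

lemma mem_idealOfVars_iff_constantCoeff {σ A : Type*} [CommRing A] (f : MvPolynomial σ A) :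
    f ∈ idealOfVars σ A ↔ constantCoeff f = 0 := by
  rw [← pow_one (idealOfVars σ A), mem_pow_idealOfVars_iff']
  simp only [Nat.lt_one_iff, Finsupp.degree_eq_zero_iff, forall_eq, constantCoeff_eq]

/-- Over a domain, the powers of the ideal of the variables are primary. -/
lemma mem_pow_idealOfVars_of_mul_mem {σ A : Type*} [CommRing A] [IsDomain A]
    {u f : MvPolynomial σ A} {n : ℕ} (hu : u ∉ idealOfVars σ A)
    (h : u * f ∈ idealOfVars σ A ^ n) : f ∈ idealOfVars σ A ^ n := by
  classical
  rw [mem_idealOfVars_iff_constantCoeff, constantCoeff_eq] at hu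
  rw [mem_pow_idealOfVars_iff'] at h ⊢
  intro x
  -- Induction on the degree of the monomial: all but one term of the coefficient of `u * f` at
  -- `x` involve coefficients of `f` at monomials of smaller degree.
  induction hk : x.degree using Nat.strong_induction_on generalizing x with
  | _ k ih =>
    subst hk
    intro hx
    have h0 := h x hx
    rw [coeff_mul, Finset.sum_eq_single ((0 : σ →₀ ℕ), x)] at h0
    · exact (mul_eq_zero.mp h0).resolve_left hu
    · rintro ⟨a, b⟩ hab hne
      rw [Finset.HasAntidiagonal.mem_antidiagonal] at hab
      have hdeg : a.degree + b.degree = x.degree := by rw [← hab, map_add]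
      have ha : a.degree ≠ 0 := by
        intro ha
        rw [Finsupp.degree_eq_zero_iff] at ha
        subst ha
        apply hne
        simpa using hab
      simp only
      rw [ih b.degree (by omega) b rfl (by omega), mul_zero]
    · intro hmem
      simp at hmem

/-! ### The linear ideals `(yᵢ - c xᵢ)` -/

/-- The ideal `(y₁ - c x₁, …, y_d - c x_d)` of `K[x, y]`. -/
noncomputable def linComp (K : Type*) [Field K] (d : ℕ) (c : K) :
    Ideal (MvPolynomial (Fin d ⊕ Fin d) K) :=
  Ideal.span (Set.range fun i : Fin d => X (Sum.inr i) - C c * X (Sum.inl i))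

/-- The change of coordinates `xᵢ ↦ xᵢ`, `yᵢ ↦ zᵢ + c xᵢ` from `K[x, y]` to `K[x][z]`. -/
noncomputable def toShift (K : Type*) [Field K] (d : ℕ) (c : K) :
    MvPolynomial (Fin d ⊕ Fin d) K →ₐ[K] MvPolynomial (Fin d) (MvPolynomial (Fin d) K) :=
  aeval (Sum.elim (fun i => C (X i)) (fun i => X i + C (C c * X i)))

/-- The change of coordinates `xᵢ ↦ xᵢ`, `zᵢ ↦ yᵢ - c xᵢ` from `K[x][z]` to `K[x, y]`. -/
noncomputable def ofShift (K : Type*) [Field K] (d : ℕ) (c : K) :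
    MvPolynomial (Fin d) (MvPolynomial (Fin d) K) →+* MvPolynomial (Fin d ⊕ Fin d) K :=
  eval₂Hom (rename (R := K) (Sum.inl : Fin d → Fin d ⊕ Fin d)).toRingHom
    (fun i => X (Sum.inr i) - C c * X (Sum.inl i))

lemma ofShift_toShift {K : Type*} [Field K] {d : ℕ} (c : K)
    (f : MvPolynomial (Fin d ⊕ Fin d) K) : ofShift K d c (toShift K d c f) = f := by
  have : (ofShift K d c).comp (toShift K d c).toRingHom = RingHom.id _ := by
    apply MvPolynomial.ringHom_ext
    · intro r
      simp [ofShift, toShift, algebraMap_eq, MvPolynomial.algebraMap_apply]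
    · rintro (i | i) <;> simp [ofShift, toShift]
  exact RingHom.congr_fun this f

lemma toShift_mem_pow_iff {K : Type*} [Field K] {d : ℕ} (c : K) (n : ℕ)
    (f : MvPolynomial (Fin d ⊕ Fin d) K) :
    toShift K d c f ∈ idealOfVars (Fin d) (MvPolynomial (Fin d) K) ^ n ↔
      f ∈ linComp K d c ^ n := by
  constructor
  · intro h
    have h1 := Ideal.mem_map_of_mem (ofShift K d c) h
    rw [ofShift_toShift, Ideal.map_pow] at h1
    refine Ideal.pow_right_mono ?_ n h1
    rw [Ideal.map_le_iff_le_comap, Ideal.span_le]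
    rintro _ ⟨i, rfl⟩
    apply Ideal.subset_span
    exact ⟨i, by simp [ofShift]⟩
  · intro h
    have h1 := Ideal.mem_map_of_mem (toShift K d c) h
    rw [Ideal.map_pow] at h1
    refine Ideal.pow_right_mono ?_ n h1
    rw [Ideal.map_le_iff_le_comap, linComp, Ideal.span_le]
    rintro _ ⟨i, rfl⟩
    apply Ideal.subset_span
    exact ⟨i, by simp [toShift, MvPolynomial.algebraMap_apply]⟩

lemma toShift_mem_iff {K : Type*} [Field K] {d : ℕ} (c : K)
    (f : MvPolynomial (Fin d ⊕ Fin d) K) :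
    toShift K d c f ∈ idealOfVars (Fin d) (MvPolynomial (Fin d) K) ↔ f ∈ linComp K d c := by
  simpa only [pow_one] using toShift_mem_pow_iff c 1 f

lemma linComp_isPrime {K : Type*} [Field K] {d : ℕ} (c : K) : (linComp K d c).IsPrime := by
  have : linComp K d c = RingHom.ker
      ((constantCoeff (σ := Fin d) (R := MvPolynomial (Fin d) K)).comp
        (toShift K d c).toRingHom) := by
    ext f
    rw [← toShift_mem_iff, mem_idealOfVars_iff_constantCoeff, RingHom.mem_ker]
    rfl
  rw [this]
  exact RingHom.ker_isPrime _

lemma mem_linComp_pow_of_mul_mem {K : Type*} [Field K] {d : ℕ} {c : K} {n : ℕ}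
    {u f : MvPolynomial (Fin d ⊕ Fin d) K} (hu : u ∉ linComp K d c)
    (h : u * f ∈ linComp K d c ^ n) : f ∈ linComp K d c ^ n := by
  rw [← toShift_mem_pow_iff] at h ⊢
  rw [← toShift_mem_iff] at hu
  rw [map_mul] at h
  exact mem_pow_idealOfVars_of_mul_mem hu h

/-- Two distinct linear components together contain all the variables. -/
lemma idealOfVars_le_of_linComp_le {K : Type*} [Field K] {d : ℕ} {a b : K} (hab : a ≠ b)
    {p : Ideal (MvPolynomial (Fin d ⊕ Fin d) K)} (ha : linComp K d a ≤ p)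
    (hb : linComp K d b ≤ p) : idealOfVars (Fin d ⊕ Fin d) K ≤ p := by
  have ha' (i : Fin d) : X (Sum.inr i) - C a * X (Sum.inl i) ∈ p :=
    ha (Ideal.subset_span ⟨i, rfl⟩)
  have hb' (i : Fin d) : X (Sum.inr i) - C b * X (Sum.inl i) ∈ p :=
    hb (Ideal.subset_span ⟨i, rfl⟩)
  have hx (i : Fin d) : X (Sum.inl i) ∈ p := by
    have h1 := p.mul_mem_left (C (b - a)⁻¹) (p.sub_mem (ha' i) (hb' i))
    have h2 : (C (b - a)⁻¹ * C (b - a) : MvPolynomial (Fin d ⊕ Fin d) K) = 1 := by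
      rw [← C_mul, inv_mul_cancel₀ (sub_ne_zero.mpr hab.symm), C_1]
    convert h1 using 1
    rw [C_sub] at h2
    linear_combination (-X (Sum.inl i)) * h2
  rw [Ideal.span_le]
  rintro _ ⟨i | i, rfl⟩
  · exact hx i
  · have := p.add_mem (ha' i) (p.mul_mem_left (C a) (hx i))
    simpa using this

lemma idealOfVars_isMaximal (K : Type*) [Field K] (σ : Type*) :
    (idealOfVars σ K).IsMaximal := by
  have : idealOfVars σ K = RingHom.ker (constantCoeff (σ := σ) (R := K)) := by
    ext f
    rw [mem_idealOfVars_iff_constantCoeff, RingHom.mem_ker]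
  rw [this]
  exact RingHom.ker_isMaximal_of_surjective _ fun a => ⟨C a, by simp⟩

/-! ### Symbolic powers -/

lemma pow_le_symbolicPower {A : Type*} [CommRing A] (I : Ideal A) (n : ℕ) :
    I ^ n ≤ symbolicPower I n :=
  le_iInf₂ fun _ _ => Ideal.le_comap_map

/-- If `s` lies in all components of an intersection of linear components except the one at `h`,
then that component is the annihilator of the class of `s`. -/
lemma linComp_mem_associatedPrimes {K : Type*} [Field K] {d : ℕ} {G : Type*} (c : G → K) (h : G)
    {s : MvPolynomial (Fin d ⊕ Fin d) K} (hs : s ∉ linComp K d (c h))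
    (hs' : ∀ k, k ≠ h → s ∈ linComp K d (c k)) :
    linComp K d (c h) ∈ associatedPrimes (MvPolynomial (Fin d ⊕ Fin d) K)
      (MvPolynomial (Fin d ⊕ Fin d) K ⧸ ⨅ k, linComp K d (c k)) := by
  have hprime := linComp_isPrime (d := d) (c h)
  refine ⟨hprime, Ideal.Quotient.mk _ s, ?_⟩
  rw [← hprime.radical]
  congr 1
  ext r
  rw [Submodule.mem_colon_singleton, Submodule.mem_bot]
  change _ ↔ Ideal.Quotient.mk _ (r * s) = 0
  rw [Ideal.Quotient.eq_zero_iff_mem, Submodule.mem_iInf]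
  constructor
  · intro hr k
    by_cases hk : k = h
    · exact hk ▸ Ideal.mul_mem_right _ _ hr
    · exact Ideal.mul_mem_left _ _ (hs' k hk)
  · intro hr
    exact (hprime.mem_or_mem (hr h)).resolve_right hs

/-- The theorem for an intersection of finitely many pairwise distinct linear components. -/
lemma map_symbolicPower_iInf_linComp {K : Type*} [Field K] {d : ℕ} {G : Type*} [Finite G]
    (c : G → K) (hc : Function.Injective c) (n : ℕ)
    (p : Ideal (MvPolynomial (Fin d ⊕ Fin d) K)) [hpp : p.IsPrime]
    (hp : p ≠ idealOfVars (Fin d ⊕ Fin d) K) :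
    Ideal.map (algebraMap _ (Localization.AtPrime p))
        (symbolicPower (⨅ k, linComp K d (c k)) n) =
      Ideal.map (algebraMap _ (Localization.AtPrime p)) ((⨅ k, linComp K d (c k)) ^ n) := by
  classical
  cases nonempty_fintype G
  refine le_antisymm ?_ (Ideal.map_mono (pow_le_symbolicPower _ _))
  set I := ⨅ k, linComp K d (c k) with hI
  by_cases hex : ∃ h, linComp K d (c h) ≤ p
  · obtain ⟨h, hh⟩ := hex
    have huniq : ∀ k, k ≠ h → ¬ linComp K d (c k) ≤ p := fun k hk hkp =>
      hp ((idealOfVars_isMaximal K _).eq_of_le hpp.ne_top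
        (idealOfVars_le_of_linComp_le (hc.ne hk) hkp hh)).symm
    obtain ⟨s, hsJ, hsp⟩ : ∃ s ∈ (Finset.univ.erase h).inf fun k => linComp K d (c k), s ∉ p := by
      rw [← SetLike.not_le_iff_exists, hpp.inf_le']
      rintro ⟨k, hk, hkp⟩
      exact huniq k (Finset.ne_of_mem_erase hk) hkp
    have hs' : ∀ k, k ≠ h → s ∈ linComp K d (c k) := fun k hk =>
      (Finset.inf_le (f := fun k => linComp K d (c k))
        (Finset.mem_erase.mpr ⟨hk, Finset.mem_univ k⟩)) hsJ
    have hass := linComp_mem_associatedPrimes c h (fun hs => hsp (hh hs)) hs'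
    have hprime := linComp_isPrime (d := d) (c h)
    rw [Ideal.map_le_iff_le_comap]
    intro f hf
    have hf1 := (Submodule.mem_iInf _).mp ((Submodule.mem_iInf _).mp hf (linComp K d (c h))) hass
    have hf2 : f ∈ linComp K d (c h) ^ n := by
      rw [Ideal.mem_comap, IsLocalization.algebraMap_mem_map_algebraMap_iff
        (linComp K d (c h)).primeCompl] at hf1
      obtain ⟨u, hu, huf⟩ := hf1
      exact mem_linComp_pow_of_mul_mem hu (Ideal.pow_right_mono (iInf_le _ h) n huf)
    rw [Ideal.mem_comap, IsLocalization.algebraMap_mem_map_algebraMap_iff p.primeCompl]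
    refine ⟨s ^ n, fun hsn => hsp (hpp.mem_of_pow_mem n hsn), ?_⟩
    have hle : Ideal.span {s} * linComp K d (c h) ≤ I := by
      refine le_iInf fun k => ?_
      by_cases hk : k = h
      · exact hk ▸ Ideal.mul_le_right
      · exact Ideal.mul_le_left.trans ((Ideal.span_singleton_le_iff_mem _).mpr (hs' k hk))
    refine Ideal.pow_right_mono hle n ?_
    rw [mul_pow]
    exact Ideal.mul_mem_mul (Ideal.pow_mem_pow (Ideal.mem_span_singleton_self s) n) hf2
  · have hIp : ¬ I ^ n ≤ p := by
      intro hle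
      have h1 : (Finset.univ.inf fun k => linComp K d (c k)) ≤ p := by
        rw [Finset.inf_univ_eq_iInf]
        exact hpp.le_of_pow_le hle
      rw [hpp.inf_le'] at h1
      obtain ⟨k, -, hk⟩ := h1
      exact hex ⟨k, hk⟩
    obtain ⟨u, hu, hup⟩ := SetLike.not_le_iff_exists.mp hIp
    rw [Ideal.eq_top_of_isUnit_mem _ (Ideal.mem_map_of_mem _ hu)
      (IsLocalization.map_units (Localization.AtPrime p) (⟨u, hup⟩ : p.primeCompl))]
    exact le_top

/-- For the cyclic group `G = ⟨g⟩` of order `t` acting on `K[x₁, …, x_d]` by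
`g(xᵢ) = ω xᵢ` with `ω` a primitive `t`-th root of unity, symbolic and ordinary powers of
the Derksen ideal agree after localization at any prime different from the homogeneous
maximal ideal. -/
theorem symbolicPower_derksenIdeal_cyclic_localized {K : Type*} [Field K] [IsAlgClosed K]
    (d t : ℕ) (G : Type*) [Group G] [Finite G]
    [MulSemiringAction G (MvPolynomial (Fin d) K)]
    (g : G) (hgen : ∀ x : G, x ∈ Subgroup.zpowers g) (hord : orderOf g = t)
    (ω : K) (hω : IsPrimitiveRoot ω t)
    (hC : ∀ (σ : G) (c : K), σ • (C c : MvPolynomial (Fin d) K) = C c)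
    (hact : ∀ i : Fin d, g • (X i : MvPolynomial (Fin d) K) = C ω * X i)
    (n : ℕ) (hn : 1 ≤ n)
    (p : Ideal (MvPolynomial (Fin d ⊕ Fin d) K)) [p.IsPrime]
    (hp : p ≠ Ideal.span (Set.range (X : Fin d ⊕ Fin d → MvPolynomial (Fin d ⊕ Fin d) K))) :
    Ideal.map (algebraMap (MvPolynomial (Fin d ⊕ Fin d) K) (Localization.AtPrime p))
        (symbolicPower (derksenIdeal K d G) n) =
      Ideal.map (algebraMap (MvPolynomial (Fin d ⊕ Fin d) K) (Localization.AtPrime p))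
        (derksenIdeal K d G ^ n) := by
  have hsmul (k : ℕ) (i : Fin d) :
      (g ^ k) • (X i : MvPolynomial (Fin d) K) = C (ω ^ k) * X i := by
    induction k with
    | zero => simp
    | succ k ih =>
      rw [pow_succ', mul_smul, ih, smul_mul', hC, hact, pow_succ, C_mul, mul_assoc]
  have hex (h : G) : ∃ k < t, g ^ k = h := by
    classical
    have := mem_zpowers_iff_mem_range_orderOf.mp (hgen h)
    simpa [hord] using this
  choose e het heg using hex
  have hinj : Function.Injective fun h => ω ^ e h := by
    intro h h' hh
    rw [← heg h, ← heg h', hω.pow_inj (het h) (het h') hh]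
  have hI : derksenIdeal K d G = ⨅ h : G, linComp K d (ω ^ e h) := by
    refine iInf_congr fun h => ?_
    have hX (i : Fin d) : h • (X i : MvPolynomial (Fin d) K) = C (ω ^ e h) * X i := by
      rw [← hsmul, heg]
    simp only [derksenComponent, linComp, hX, map_mul, rename_C, rename_X]
  rw [hI]
  exact map_symbolicPower_iInf_linComp _ hinj n p hp
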